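/- arXiv:2208.10203 — 3 statements merged into one kernel-verified Lean document; each statement's English description precedes it below -/
import Mathlib

section
/- Let (N_n)_{n=1}^∞ be a sequence of positive integers such that M_n := Σ_{k=1}^n N_k ≤ c·N_{n+1} for some constant c and all n. Let (Γ_n)_{n=1}^∞ be a sequence of positive reals having the lower regularity property, such that both (Γ_n) and (n/Γ_n) are non-decreasing, and let 0<p≤1. Then sup_{r∈ℕ} Σ_{n=1}^r Γ_{N_n}^p/Γ_{N_r}^p < ∞ and sup_{r∈ℕ} Σ_{n=r}^∞ Γ_{N_r}^p/Γ_{N_n}^p < ∞. -/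
noncomputable section

open Classical
open scoped ENNReal NNReal

namespace AGpaper

/-! ### Convergence and completeness with respect to a gauge -/

/-- Convergence of a sequence with respect to a gauge (quasi-norm) `q`. -/
def QTendsto {X : Type*} [AddCommGroup X] (q : X → ℝ) (u : ℕ → X) (x : X) : Prop :=
  ∀ ε : ℝ, 0 < ε → ∃ n₀ : ℕ, ∀ n, n₀ ≤ n → q (u n - x) < ε

/-- Cauchy condition with respect to a gauge `q`. -/
def QCauchy {X : Type*} [AddCommGroup X] (q : X → ℝ) (u : ℕ → X) : Prop :=
  ∀ ε : ℝ, 0 < ε → ∃ n₀ : ℕ, ∀ m, n₀ ≤ m → ∀ n, n₀ ≤ n → q (u m - u n) < ε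

/-- A quasi-Banach space structure on a real vector space `X`. -/
structure QuasiBanach (X : Type*) [AddCommGroup X] [Module ℝ X] where
  q : X → ℝ
  kappa : ℝ
  one_le_kappa : 1 ≤ kappa
  q_nonneg : ∀ x, 0 ≤ q x
  q_eq_zero_iff : ∀ x, q x = 0 ↔ x = 0
  q_smul : ∀ (a : ℝ) (x : X), q (a • x) = |a| * q x
  q_triangle : ∀ x y, q (x + y) ≤ kappa * (q x + q y)
  complete : ∀ u : ℕ → X, QCauchy q u → ∃ x, QTendsto q u x

/-- `X` is `p`-convex (0<p≤1): after renorming the quasi-norm is a `p`-norm. -/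
def QuasiBanach.PConvex {X : Type*} [AddCommGroup X] [Module ℝ X]
    (B : QuasiBanach X) (p : ℝ) : Prop :=
  ∃ q' : X → ℝ, (∀ x, 0 ≤ q' x) ∧ (∀ (a : ℝ) (x : X), q' (a • x) = |a| * q' x) ∧
    (∀ x y, q' (x + y) ^ p ≤ q' x ^ p + q' y ^ p) ∧
    ∃ c C : ℝ, 0 < c ∧ ∀ x, c * B.q x ≤ q' x ∧ q' x ≤ C * B.q x

/-! ### Biorthogonal systems and Schauder bases -/

variable {X : Type*} [AddCommGroup X] [Module ℝ X]

/-- A biorthogonal system in a space of vectors `X` which is equipped with a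
membership predicate `mem` (the carrier of the space) and a gauge `nrm`:
the coordinate functionals are linear and bounded on the carrier. -/
structure BioSystem (mem : X → Prop) (nrm : X → ℝ) where
  vec : ℕ → X
  vec_mem : ∀ n, mem (vec n)
  coord : ℕ → X → ℝ
  coord_add : ∀ (n : ℕ) (f g : X), mem f → mem g → coord n (f + g) = coord n f + coord n g
  coord_smul : ∀ (n : ℕ) (a : ℝ) (f : X), mem f → coord n (a • f) = a * coord n f
  coord_bdd : ∀ n : ℕ, ∃ C : ℝ, ∀ f, mem f → |coord n f| ≤ C * nrm f
  biorth : ∀ m n, coord m (vec n) = if m = n then (1 : ℝ) else 0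

/-- A Schauder basis: a biorthogonal system whose expansions converge. -/
structure SchauderB (mem : X → Prop) (nrm : X → ℝ) extends BioSystem mem nrm where
  expansion : ∀ f, mem f →
    QTendsto nrm (fun m => ∑ n ∈ Finset.range m, coord n f • vec n) f

/-- A Schauder basis of a quasi-Banach space. -/
abbrev QBasis {X : Type*} [AddCommGroup X] [Module ℝ X] (B : QuasiBanach X) :=
  SchauderB (fun _ : X => True) B.q

variable {mem : X → Prop} {nrm : X → ℝ}

/-- Coordinate projection on a finite set `A`. -/
def BioSystem.proj (b : BioSystem mem nrm) (A : Finset ℕ) (f : X) : X :=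
  ∑ n ∈ A, b.coord n f • b.vec n

def BioSystem.SemiNormalized (b : BioSystem mem nrm) : Prop :=
  ∃ c C : ℝ, 0 < c ∧ ∀ n, c ≤ nrm (b.vec n) ∧ nrm (b.vec n) ≤ C

/-- `A` is a greedy set of `f`. -/
def BioSystem.GreedySet (b : BioSystem mem nrm) (f : X) (A : Finset ℕ) : Prop :=
  ∀ j ∈ A, ∀ k, k ∉ A → |b.coord k f| ≤ |b.coord j f|

def BioSystem.QuasiGreedy (b : BioSystem mem nrm) : Prop :=
  ∃ C : ℝ, ∀ f, mem f → ∀ A : Finset ℕ, b.GreedySet f A → nrm (b.proj A f) ≤ C * nrm f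

def BioSystem.Democratic (b : BioSystem mem nrm) : Prop :=
  ∃ C : ℝ, ∀ A B : Finset ℕ, A.card ≤ B.card →
    nrm (∑ n ∈ A, b.vec n) ≤ C * nrm (∑ n ∈ B, b.vec n)

def BioSystem.AlmostGreedy (b : BioSystem mem nrm) : Prop :=
  b.QuasiGreedy ∧ b.Democratic

/-- Asymptotic suppression unconditionality: coordinate projections `S_A` with
`|A| < min A` are uniformly bounded. -/
def BioSystem.ASU (b : BioSystem mem nrm) : Prop :=
  ∃ D : ℝ, ∀ A : Finset ℕ, (∀ n ∈ A, A.card < n) →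
    ∀ f, mem f → nrm (b.proj A f) ≤ D * nrm f

/-- The fundamental function (upper super-democracy function). -/
def BioSystem.fundFun (b : BioSystem mem nrm) (m : ℕ) : ℝ :=
  sSup {t : ℝ | ∃ (A : Finset ℕ) (ε : ℕ → ℝ), A.card ≤ m ∧ (∀ n ∈ A, |ε n| = 1) ∧
    t = nrm (∑ n ∈ A, ε n • b.vec n)}

/-- The unconditionality parameters `k_m`. -/
def BioSystem.kparam (b : BioSystem mem nrm) (m : ℕ) : ℝ :=
  sSup {t : ℝ | ∃ (A : Finset ℕ) (f : X), A.card ≤ m ∧ mem f ∧ nrm f ≤ 1 ∧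
    t = nrm (b.proj A f)}

/-- The unconditionality parameters `k̃_m` (restricted to the span of the first
`m` basis vectors). -/
def BioSystem.ktilde (b : BioSystem mem nrm) (m : ℕ) : ℝ :=
  sSup {t : ℝ | ∃ (A : Finset ℕ) (a : ℕ → ℝ),
    nrm (∑ n ∈ Finset.range m, a n • b.vec n) ≤ 1 ∧
    t = nrm (b.proj A (∑ n ∈ Finset.range m, a n • b.vec n))}

/-! ### Symmetric and subsymmetric sequence spaces -/

/-- The indicator of `{0, 1, ..., m-1}`. -/
def indic (m : ℕ) : ℕ → ℝ := fun j => if j < m then 1 else 0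

/-- The `n`-th unit vector. -/
def unitVec (n : ℕ) : ℕ → ℝ := fun j => if j = n then 1 else 0

/-- The spreading `Σ_n ε_n f_n e_{φ(n)}` of a sequence `f`. -/
def spread (φ : ℕ → ℕ) (ε : ℕ → ℝ) (f : ℕ → ℝ) : ℕ → ℝ :=
  fun j => if h : ∃ n, φ n = j then ε h.choose * f h.choose else 0

/-- A symmetric sequence space: a quasi-Banach sequence space whose quasi-norm is
invariant under permutations and signs. -/
structure SymmetricSpace where
  mem : (ℕ → ℝ) → Prop
  nrm : (ℕ → ℝ) → ℝ
  kappa : ℝ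
  one_le_kappa : 1 ≤ kappa
  zero_mem : mem 0
  add_mem : ∀ {f g}, mem f → mem g → mem (f + g)
  smul_mem : ∀ (a : ℝ) {f}, mem f → mem (a • f)
  nrm_nonneg : ∀ f, 0 ≤ nrm f
  nrm_eq_zero : ∀ {f}, mem f → (nrm f = 0 ↔ f = 0)
  nrm_smul : ∀ (a : ℝ) (f : ℕ → ℝ), nrm (a • f) = |a| * nrm f
  nrm_triangle : ∀ {f g}, mem f → mem g → nrm (f + g) ≤ kappa * (nrm f + nrm g)
  complete : ∀ u : ℕ → (ℕ → ℝ), (∀ n, mem (u n)) → QCauchy nrm u →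
    ∃ f, mem f ∧ QTendsto nrm u f
  symmetric : ∀ {f}, mem f → ∀ (ε : ℕ → ℝ), (∀ n, |ε n| = 1) → ∀ π : Equiv.Perm ℕ,
    mem (fun j => ε j * f (π j)) ∧ nrm (fun j => ε j * f (π j)) = nrm f

/-- Fundamental function of a symmetric sequence space. -/
def SymmetricSpace.Lam (S : SymmetricSpace) (m : ℕ) : ℝ := S.nrm (indic m)

/-- A (locally convex, i.e. Banach) subsymmetric sequence space. -/
structure SubsymmetricSpace where
  mem : (ℕ → ℝ) → Prop
  nrm : (ℕ → ℝ) → ℝ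
  zero_mem : mem 0
  add_mem : ∀ {f g}, mem f → mem g → mem (f + g)
  smul_mem : ∀ (a : ℝ) {f}, mem f → mem (a • f)
  nrm_nonneg : ∀ f, 0 ≤ nrm f
  nrm_eq_zero : ∀ {f}, mem f → (nrm f = 0 ↔ f = 0)
  nrm_smul : ∀ (a : ℝ) (f : ℕ → ℝ), nrm (a • f) = |a| * nrm f
  nrm_triangle : ∀ {f g}, mem f → mem g → nrm (f + g) ≤ nrm f + nrm g
  complete : ∀ u : ℕ → (ℕ → ℝ), (∀ n, mem (u n)) → QCauchy nrm u →
    ∃ f, mem f ∧ QTendsto nrm u f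
  unit_mem : ∀ n, mem (unitVec n)
  unit_basis : ∀ f, mem f →
    QTendsto nrm (fun m => fun j => if j < m then f j else 0) f
  subsym : ∀ {f}, mem f → ∀ (ε : ℕ → ℝ), (∀ n, |ε n| = 1) → ∀ φ : ℕ → ℕ, StrictMono φ →
    mem (spread φ ε f) ∧ nrm (spread φ ε f) = nrm f

/-- Fundamental function of (the unit vector system of) a subsymmetric sequence space. -/
def SubsymmetricSpace.Lam (S : SubsymmetricSpace) (m : ℕ) : ℝ := S.nrm (indic m)

/-- The dual fundamental function `Λ*_m = m / Λ_m`. -/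
def SubsymmetricSpace.LamStar (S : SubsymmetricSpace) (m : ℕ) : ℝ := (m : ℝ) / S.Lam m

/-- Lower regularity property of a sequence of positive reals (indexed by `m ≥ 1`). -/
def LRP (Γ : ℕ → ℝ) : Prop := ∃ b : ℕ, 0 < b ∧ ∀ m : ℕ, 1 ≤ m → 2 * Γ m ≤ Γ (b * m)

/-- Upper regularity property. -/
def URP (Γ : ℕ → ℝ) : Prop := ∃ b : ℕ, 0 < b ∧ ∀ m : ℕ, 1 ≤ m → 2 * Γ (b * m) ≤ (b : ℝ) * Γ m

/-- Superreflexivity of a subsymmetric sequence space: it admits an equivalent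
uniformly convex norm. -/
def SubsymmetricSpace.Superreflexive (S : SubsymmetricSpace) : Prop :=
  ∃ nrm' : (ℕ → ℝ) → ℝ,
    (∀ f, S.mem f → 0 ≤ nrm' f) ∧
    (∀ (a : ℝ) (f), S.mem f → nrm' (a • f) = |a| * nrm' f) ∧
    (∀ f g, S.mem f → S.mem g → nrm' (f + g) ≤ nrm' f + nrm' g) ∧
    (∃ c C : ℝ, 0 < c ∧ ∀ f, S.mem f → c * S.nrm f ≤ nrm' f ∧ nrm' f ≤ C * S.nrm f) ∧
    (∀ ε : ℝ, 0 < ε → ∃ δ : ℝ, 0 < δ ∧ ∀ f g, S.mem f → S.mem g →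
      nrm' f ≤ 1 → nrm' g ≤ 1 → ε ≤ nrm' (f - g) → nrm' (f + g) ≤ 2 * (1 - δ))

/-! ### Upper and lower estimates -/

/-- A finite family with pairwise disjoint supports. -/
def DisjFam {ι : Type*} (F : ι → (ℕ → ℝ)) (J : Finset ι) : Prop :=
  ∀ i ∈ J, ∀ j ∈ J, i ≠ j → ∀ k, F i k = 0 ∨ F j k = 0

/-- `(Σ_{i∈J} |g i|^q)^{1/q}`, interpreted as `max_{i∈J} |g i|` when `q = ∞`. -/
def estNorm (q : ℝ≥0∞) {ι : Type*} (J : Finset ι) (g : ι → ℝ) : ℝ :=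
  if q = ⊤ then ((J.sup fun i => Real.toNNReal |g i| : NNReal) : ℝ)
  else (∑ i ∈ J, |g i| ^ q.toReal) ^ (1 / q.toReal)

/-- Upper `s`-estimate for a subsymmetric space (`s` finite). -/
def SubsymmetricSpace.UpperEst (S : SubsymmetricSpace) (s : ℝ) : Prop :=
  ∃ C : ℝ, ∀ (J : Finset ℕ) (F : ℕ → (ℕ → ℝ)), (∀ i ∈ J, S.mem (F i)) → DisjFam F J →
    S.nrm (∑ i ∈ J, F i) ≤ C * (∑ i ∈ J, S.nrm (F i) ^ s) ^ (1 / s)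

/-- Lower `q`-estimate for a subsymmetric space (`q` finite). -/
def SubsymmetricSpace.LowerEst (S : SubsymmetricSpace) (q : ℝ) : Prop :=
  ∃ C : ℝ, ∀ (J : Finset ℕ) (F : ℕ → (ℕ → ℝ)), (∀ i ∈ J, S.mem (F i)) → DisjFam F J →
    (∑ i ∈ J, S.nrm (F i) ^ q) ^ (1 / q) ≤ C * S.nrm (∑ i ∈ J, F i)

/-- Lower `q`-estimate, `q ∈ (0, ∞]`. -/
def SubsymmetricSpace.LowerEstE (S : SubsymmetricSpace) (q : ℝ≥0∞) : Prop :=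
  ∃ C : ℝ, ∀ (J : Finset ℕ) (F : ℕ → (ℕ → ℝ)), (∀ i ∈ J, S.mem (F i)) → DisjFam F J →
    estNorm q J (fun i => S.nrm (F i)) ≤ C * S.nrm (∑ i ∈ J, F i)

/-! ### Squeeze-symmetry -/

/-- The system is squeezed between the symmetric spaces `S₁` and `S₂`: the series
transform is bounded from `S₁` (on finitely supported vectors) and the coefficient
transform is bounded into `S₂`. -/
def BioSystem.SqueezedBetween (b : BioSystem mem nrm) (S₁ S₂ : SymmetricSpace) : Prop :=
  (∃ C : ℝ, ∀ a : ℕ →₀ ℝ, S₁.mem ⇑a →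
    nrm (∑ n ∈ a.support, a n • b.vec n) ≤ C * S₁.nrm ⇑a) ∧
  (∃ C : ℝ, ∀ f, mem f → S₂.mem (fun n => b.coord n f) ∧
    S₂.nrm (fun n => b.coord n f) ≤ C * nrm f)

/-- Squeeze-symmetric system: squeezed between two symmetric spaces with
equivalent fundamental functions. -/
def BioSystem.SqueezeSymmetric (b : BioSystem mem nrm) : Prop :=
  ∃ S₁ S₂ : SymmetricSpace, b.SqueezedBetween S₁ S₂ ∧
    ∃ c C : ℝ, 0 < c ∧ ∀ m : ℕ, 1 ≤ m →
      c * S₂.Lam m ≤ S₁.Lam m ∧ S₁.Lam m ≤ C * S₂.Lam m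

/-! ### Ordered partitions and the Dilworth–Kalton–Kutzarova construction -/

/-- An ordered partition of `ℕ` into (finite, nonempty) integer intervals. -/
structure OrderedPartition where
  part : ℕ → Finset ℕ
  nonempty : ∀ n, (part n).Nonempty
  ordered : ∀ n, ∀ i ∈ part n, ∀ j ∈ part (n + 1), i < j
  covers : ∀ k : ℕ, ∃ n, k ∈ part n

def OrderedPartition.N (σ : OrderedPartition) (n : ℕ) : ℕ := (σ.part n).card

def OrderedPartition.M (σ : OrderedPartition) (r : ℕ) : ℕ := ∑ n ∈ Finset.range r, σ.N n

/-- The averaging projection `P_σ`. -/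
def OrderedPartition.Pavg (σ : OrderedPartition) (f : ℕ → ℝ) : ℕ → ℝ := fun j =>
  if h : ∃ n, j ∈ σ.part n then
    (∑ i ∈ σ.part h.choose, f i) / ((σ.part h.choose).card : ℝ)
  else 0

/-- The complementary projection `Q_σ = Id - P_σ`. -/
def OrderedPartition.Qavg (σ : OrderedPartition) (f : ℕ → ℝ) : ℕ → ℝ := f - σ.Pavg f

/-- The functionals `v_n* = (Λ*_{N_n})⁻¹ Σ_{j∈σ_n} e_j*`. -/
def vstar (S : SubsymmetricSpace) (σ : OrderedPartition) (n : ℕ) (f : ℕ → ℝ) : ℝ :=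
  (S.Lam (σ.N n) / (σ.N n : ℝ)) * ∑ j ∈ σ.part n, f j

/-- The map `H(f) = Σ_n v_n*(f) x_n`. -/
def Hmap {X : Type*} [AddCommGroup X] [Module ℝ X] (B : QuasiBanach X) (b : QBasis B)
    (S : SubsymmetricSpace) (σ : OrderedPartition) (f : ℕ → ℝ) : X :=
  ∑ᶠ n, vstar S σ n f • b.vec n

/-- The quasi-norm `‖f‖ = ‖Q_σ f‖_S + ‖H f‖_X` on finitely supported sequences,
whose completion is the space `𝕐[𝒳,𝕊,σ]`. -/
def YNorm {X : Type*} [AddCommGroup X] [Module ℝ X] (B : QuasiBanach X) (b : QBasis B)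
    (S : SubsymmetricSpace) (σ : OrderedPartition) (f : ℕ → ℝ) : ℝ :=
  S.nrm (σ.Qavg f) + B.q (Hmap B b S σ f)

/-! ### Concrete sequence spaces -/

/-- Membership in `ℓ_p`, `0 < p < ∞`. -/
def lpMem (p : ℝ) (f : ℕ → ℝ) : Prop := Summable fun n => |f n| ^ p

/-- The `ℓ_p` quasi-norm, `0 < p < ∞`. -/
def lpNrm (p : ℝ) (f : ℕ → ℝ) : ℝ := (∑' n, |f n| ^ p) ^ (1 / p)

/-- Membership in `ℓ_p` for extended `p` (where `ℓ_∞` means `c₀`). -/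
def lpMemE (p : ℝ≥0∞) (f : ℕ → ℝ) : Prop :=
  if p = ⊤ then Filter.Tendsto f Filter.atTop (nhds 0) else lpMem p.toReal f

/-- The `ℓ_p` quasi-norm for extended `p`. -/
def lpNrmE (p : ℝ≥0∞) (f : ℕ → ℝ) : ℝ :=
  if p = ⊤ then ⨆ n, |f n| else lpNrm p.toReal f

/-- Membership in the matrix space `Z_{p,q} = ℓ_q(ℓ_p)` (with `ℓ_∞` meaning `c₀`). -/
def ZMem (p q : ℝ≥0∞) (f : ℕ → ℕ → ℝ) : Prop :=
  (∀ n, lpMemE p (f n)) ∧ lpMemE q (fun n => lpNrmE p (f n))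

/-- The quasi-norm of `Z_{p,q} = ℓ_q(ℓ_p)`. -/
def ZNrm (p q : ℝ≥0∞) (f : ℕ → ℕ → ℝ) : ℝ := lpNrmE q (fun n => lpNrmE p (f n))


/-!
Let `M n` be the sum of the first `n` terms of `N`. From `M n ≤ c * N n` one gets
`M n ≤ c / (1 + c) * M (n + 1)`, so `M`, and with it `N`, grows geometrically:
`N n ≤ C * θ ^ k * N (n + k)` for some `θ < 1`. Iterating the lower regularity inequality makes `Γ`
grow at least like a power, `Γ m ≤ 2 * (m / n) ^ β * Γ n` for `m ≤ n`. As `N` need not be monotone,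
this is applied to `N n` and `L * N (n + k)` with an integer `L ≥ C`; the doubling condition, which
holds because `n / Γ n` is non-decreasing, removes the dilation by `L`. Hence `Γ ∘ N`, and each of
its positive powers, grows geometrically, and both sums are dominated by geometric series.
-/

/-- Growth at least as fast as a geometric progression of ratio `θ⁻¹ > 1`, up to a constant
factor. The constant `C` makes room for local decrease, so `u` need not be monotone. The degenerate
value `θ = 0` is allowed; it cannot occur when `u` is positive. -/
def GeometricGrowth (u : ℕ → ℝ) : Prop :=
  ∃ C : ℝ, 0 ≤ C ∧ ∃ θ ∈ Set.Ico (0 : ℝ) 1, ∀ n k : ℕ, u n ≤ C * θ ^ k * u (n + k)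

/-- The doubling condition for a sequence indexed by the positive integers; the value at `0` is
disregarded. -/
def Doubling (Γ : ℕ → ℝ) : Prop := ∃ D : ℝ, ∀ m : ℕ, 1 ≤ m → Γ (2 * m) ≤ D * Γ m

section GeometricGrowth

variable {u : ℕ → ℝ}

theorem le_pow_mul_of_le_mul_succ {θ : ℝ} (hθ : 0 ≤ θ) (h : ∀ n, u n ≤ θ * u (n + 1))
    (n k : ℕ) : u n ≤ θ ^ k * u (n + k) := by
  induction k with
  | zero => simp
  | succ k ih =>
    calc u n ≤ θ ^ k * u (n + k) := ih
      _ ≤ θ ^ k * (θ * u (n + k + 1)) := by gcongr; exact h _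
      _ = θ ^ (k + 1) * u (n + (k + 1)) := by rw [← add_assoc]; ring

theorem geometricGrowth_of_sum_range_le (hu : ∀ n, 0 < u n) {c : ℝ}
    (h : ∀ n, ∑ k ∈ Finset.range n, u k ≤ c * u n) : GeometricGrowth u := by
  have hc : 0 ≤ c := nonneg_of_mul_nonneg_left (by simpa using h 0) (hu 0)
  set S : ℕ → ℝ := fun n => ∑ k ∈ Finset.range n, u k
  have hS_succ (n : ℕ) : S (n + 1) = S n + u n := Finset.sum_range_succ u n
  have hS_nonneg (n : ℕ) : 0 ≤ S n := Finset.sum_nonneg fun k _ => (hu k).le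
  have hS_step (n : ℕ) : S n ≤ c / (1 + c) * S (n + 1) := by
    rw [div_mul_eq_mul_div, le_div_iff₀ (by positivity), hS_succ]
    linarith [h n]
  refine ⟨1 + c, by positivity, c / (1 + c),
    ⟨by positivity, (div_lt_one (by positivity)).2 (by linarith)⟩, fun n k => ?_⟩
  calc u n ≤ S (n + 1) := by linarith [hS_succ n, hS_nonneg n]
    _ ≤ (c / (1 + c)) ^ k * S (n + 1 + k) :=
        le_pow_mul_of_le_mul_succ (by positivity) hS_step _ _
    _ ≤ (c / (1 + c)) ^ k * ((1 + c) * u (n + k)) := by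
        gcongr
        rw [add_right_comm, hS_succ]
        linarith [h (n + k)]
    _ = (1 + c) * (c / (1 + c)) ^ k * u (n + k) := by ring

theorem sum_range_pow_le_one_div {θ : ℝ} (hθ : θ ∈ Set.Ico (0 : ℝ) 1) (n : ℕ) :
    ∑ k ∈ Finset.range n, θ ^ k ≤ 1 / (1 - θ) := by
  simpa using geom_sum_Ico_le_of_lt_one (m := 0) (n := n) hθ.1 hθ.2

theorem GeometricGrowth.rpow (h : GeometricGrowth u) (hu : ∀ n, 0 ≤ u n) {p : ℝ} (hp : 0 < p) :
    GeometricGrowth fun n => u n ^ p := by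
  obtain ⟨C, hC, θ, ⟨hθ_nonneg, hθ_lt⟩, h⟩ := h
  refine ⟨C ^ p, by positivity, θ ^ p,
    ⟨by positivity, Real.rpow_lt_one hθ_nonneg hθ_lt hp⟩, fun n k => ?_⟩
  calc u n ^ p ≤ (C * θ ^ k * u (n + k)) ^ p := Real.rpow_le_rpow (hu n) (h n k) hp.le
    _ = C ^ p * (θ ^ p) ^ k * u (n + k) ^ p := by
        rw [Real.mul_rpow (by positivity) (hu _), Real.mul_rpow hC (by positivity),
          Real.rpow_pow_comm hθ_nonneg]

theorem GeometricGrowth.exists_sum_range_div_le (h : GeometricGrowth u) (hu : ∀ n, 0 < u n) :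
    ∃ K : ℝ, ∀ r : ℕ, ∑ n ∈ Finset.range (r + 1), u n / u r ≤ K := by
  obtain ⟨C, hC, θ, hθ, h⟩ := h
  refine ⟨C * (1 / (1 - θ)), fun r => ?_⟩
  calc ∑ n ∈ Finset.range (r + 1), u n / u r
      ≤ ∑ n ∈ Finset.range (r + 1), C * θ ^ (r - n) := by
        gcongr with n hn
        rw [div_le_iff₀ (hu r)]
        simpa only [Nat.add_sub_cancel' (Finset.mem_range_succ_iff.1 hn)] using h n (r - n)
    _ = C * ∑ k ∈ Finset.range (r + 1), θ ^ k := by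
        rw [← Finset.mul_sum]
        exact congrArg (C * ·) (Finset.sum_range_reflect (θ ^ ·) (r + 1))
    _ ≤ C * (1 / (1 - θ)) := by gcongr; exact sum_range_pow_le_one_div hθ _

theorem GeometricGrowth.exists_sum_Icc_div_le (h : GeometricGrowth u) (hu : ∀ n, 0 < u n) :
    ∃ K : ℝ, ∀ r R : ℕ, ∑ n ∈ Finset.Icc r R, u r / u n ≤ K := by
  obtain ⟨C, hC, θ, hθ, h⟩ := h
  refine ⟨C * (1 / (1 - θ)), fun r R => ?_⟩
  calc ∑ n ∈ Finset.Icc r R, u r / u n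
      = ∑ k ∈ Finset.range (R + 1 - r), u r / u (r + k) := by
        rw [← Finset.Ico_add_one_right_eq_Icc, Finset.sum_Ico_eq_sum_range]
    _ ≤ ∑ k ∈ Finset.range (R + 1 - r), C * θ ^ k := by
        gcongr with k
        exact (div_le_iff₀ (hu _)).2 (h r k)
    _ = C * ∑ k ∈ Finset.range (R + 1 - r), θ ^ k := (Finset.mul_sum _ _ _).symm
    _ ≤ C * (1 / (1 - θ)) := by gcongr; exact sum_range_pow_le_one_div hθ _

end GeometricGrowth

section Regularity

variable {Γ : ℕ → ℝ}

theorem doubling_of_monotoneOn_div (hpos : ∀ m, 1 ≤ m → 0 < Γ m)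
    (hdual : MonotoneOn (fun m : ℕ => (m : ℝ) / Γ m) (Set.Ici 1)) : Doubling Γ := by
  refine ⟨2, fun m hm => ?_⟩
  have h2m : 1 ≤ 2 * m := by omega
  have hdiv : (m : ℝ) / Γ m ≤ ((2 * m : ℕ) : ℝ) / Γ (2 * m) := hdual hm h2m (by omega)
  rw [div_le_div_iff₀ (hpos m hm) (hpos _ h2m)] at hdiv
  push_cast at hdiv
  exact le_of_mul_le_mul_left (by linarith) (Nat.cast_pos.2 hm : (0 : ℝ) < m)

theorem Doubling.exists_le_mul (h : Doubling Γ) (hpos : ∀ m, 1 ≤ m → 0 < Γ m)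
    (hmono : MonotoneOn Γ (Set.Ici 1)) {L : ℕ} (hL : 0 < L) :
    ∃ D : ℝ, 0 ≤ D ∧ ∀ m, 1 ≤ m → Γ (L * m) ≤ D * Γ m := by
  obtain ⟨D, hD⟩ := h
  have hD_nonneg : 0 ≤ D :=
    nonneg_of_mul_nonneg_left ((hpos 2 one_le_two).le.trans (hD 1 le_rfl)) (hpos 1 le_rfl)
  refine ⟨D ^ L, by positivity, fun m hm => ?_⟩
  have hpow (k : ℕ) : 1 ≤ 2 ^ k * m := Nat.mul_pos (by positivity) hm
  have hiter : Γ (2 ^ L * m) ≤ D ^ L * Γ m := by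
    simpa using le_geom (u := fun k => Γ (2 ^ k * m)) hD_nonneg L fun k _ => by
      simpa only [pow_succ', mul_assoc] using hD _ (hpow k)
  exact (hmono (Nat.mul_pos hL hm) (hpow L)
    (Nat.mul_le_mul_right m Nat.lt_two_pow_self.le)).trans hiter

theorem two_pow_mul_le_of_two_mul_le {b : ℕ} (hb_pos : 0 < b)
    (hb : ∀ m, 1 ≤ m → 2 * Γ m ≤ Γ (b * m)) (j : ℕ) {m : ℕ} (hm : 1 ≤ m) :
    2 ^ j * Γ m ≤ Γ (b ^ j * m) := by
  simpa using geom_le (u := fun k => Γ (b ^ k * m)) zero_le_two j fun k _ => by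
    simpa only [pow_succ', mul_assoc] using hb _ (Nat.mul_pos (pow_pos hb_pos k) hm)

theorem inv_two_pow_le_rpow_logb {b m n j : ℕ} (hb : 1 < b) (hn : 0 < n)
    (h : n ≤ b ^ j * m) : ((2 : ℝ) ^ j)⁻¹ ≤ ((m : ℝ) / n) ^ Real.logb b 2 := by
  have hb_real : (1 : ℝ) < b := by exact_mod_cast hb
  have hn_real : (0 : ℝ) < n := Nat.cast_pos.2 hn
  have hratio : ((b : ℝ) ^ j)⁻¹ ≤ (m : ℝ) / n := by
    rw [inv_le_iff_one_le_mul₀ (by positivity), div_mul_eq_mul_div, one_le_div hn_real, mul_comm]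
    exact_mod_cast h
  calc ((2 : ℝ) ^ j)⁻¹ = (((b : ℝ) ^ j)⁻¹) ^ Real.logb b 2 := by
        rw [Real.inv_rpow (by positivity), ← Real.rpow_pow_comm (by positivity),
          Real.rpow_logb (by positivity) hb_real.ne' two_pos]
    _ ≤ ((m : ℝ) / n) ^ Real.logb b 2 :=
        Real.rpow_le_rpow (by positivity) hratio (Real.logb_pos hb_real one_lt_two).le

/- Choosing `j` with `b ^ j ≤ n / m < b ^ (j + 1)`, the regularity inequality iterated `j` times
gains `2 ^ j`; the rounding of `log_b (n / m)` to `j` costs the constant `2`. -/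
theorem LRP.exists_le_rpow_mul (h : LRP Γ) (hpos : ∀ m, 1 ≤ m → 0 < Γ m)
    (hmono : MonotoneOn Γ (Set.Ici 1)) :
    ∃ β : ℝ, 0 < β ∧ ∀ m n : ℕ, 1 ≤ m → m ≤ n → Γ m ≤ 2 * ((m : ℝ) / n) ^ β * Γ n := by
  obtain ⟨b, hb_pos, hb⟩ := h
  have hb_one : 1 < b := by
    by_contra! hle
    obtain rfl : b = 1 := le_antisymm hle hb_pos
    have hdouble_le : 2 * Γ 1 ≤ Γ 1 := hb 1 le_rfl
    linarith [hpos 1 le_rfl]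
  refine ⟨Real.logb b 2, Real.logb_pos (by exact_mod_cast hb_one) one_lt_two,
    fun m n hm hmn => ?_⟩
  set j := Nat.log b (n / m)
  have hbj_le : b ^ j * m ≤ n :=
    (Nat.le_div_iff_mul_le hm).1 (Nat.pow_log_le_self b (Nat.div_pos hmn hm).ne')
  have hn_lt : n < b ^ (j + 1) * m :=
    (Nat.div_lt_iff_lt_mul hm).1 (Nat.lt_pow_succ_log_self hb_one _)
  have hiter : 2 ^ j * Γ m ≤ Γ n :=
    (two_pow_mul_le_of_two_mul_le hb_pos hb j hm).trans
      (hmono (Nat.mul_pos (pow_pos hb_pos j) hm) (hm.trans hmn) hbj_le)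
  have hΓn : 0 < Γ n := hpos n (hm.trans hmn)
  calc Γ m ≤ (2 ^ j)⁻¹ * Γ n := (le_inv_mul_iff₀ (by positivity)).2 hiter
    _ = 2 * (2 ^ (j + 1))⁻¹ * Γ n := by rw [pow_succ]; field_simp
    _ ≤ 2 * ((m : ℝ) / n) ^ Real.logb b 2 * Γ n := by
        gcongr
        exact inv_two_pow_le_rpow_logb hb_one (hm.trans hmn) hn_lt.le

theorem GeometricGrowth.comp_of_lrp_of_doubling {N : ℕ → ℕ}
    (h : GeometricGrowth fun n => (N n : ℝ)) (hN : ∀ n, 0 < N n)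
    (hpos : ∀ m, 1 ≤ m → 0 < Γ m) (hLRP : LRP Γ) (hmono : MonotoneOn Γ (Set.Ici 1))
    (hdouble : Doubling Γ) :
    GeometricGrowth fun n => Γ (N n) := by
  obtain ⟨C, -, θ, ⟨hθ_nonneg, hθ_lt⟩, hgrowth⟩ := h
  obtain ⟨β, hβ, hpower⟩ := hLRP.exists_le_rpow_mul hpos hmono
  obtain ⟨L, hL_pos, hCL⟩ : ∃ L : ℕ, 0 < L ∧ C ≤ L :=
    ⟨⌈C⌉₊ + 1, Nat.succ_pos _, (Nat.le_ceil C).trans (by norm_num)⟩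
  obtain ⟨D, hD, hdilate⟩ := hdouble.exists_le_mul hpos hmono hL_pos
  refine ⟨2 * D, by positivity, θ ^ β,
    ⟨by positivity, Real.rpow_lt_one hθ_nonneg hθ_lt hβ⟩, fun n k => ?_⟩
  have hbound : (N n : ℝ) ≤ θ ^ k * (L * N (n + k) : ℕ) := by
    calc (N n : ℝ) ≤ C * θ ^ k * N (n + k) := hgrowth n k
      _ ≤ L * θ ^ k * N (n + k) := by gcongr
      _ = θ ^ k * (L * N (n + k) : ℕ) := by push_cast; ring
  have hle : N n ≤ L * N (n + k) := by
    exact_mod_cast hbound.trans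
      (mul_le_of_le_one_left (Nat.cast_nonneg _) (pow_le_one₀ hθ_nonneg hθ_lt.le))
  have hL_pos' : 0 < L * N (n + k) := Nat.mul_pos hL_pos (hN _)
  have hratio : (N n : ℝ) / (L * N (n + k) : ℕ) ≤ θ ^ k :=
    (div_le_iff₀ (Nat.cast_pos.2 hL_pos')).2 hbound
  calc Γ (N n)
      ≤ 2 * ((N n : ℝ) / (L * N (n + k) : ℕ)) ^ β * Γ (L * N (n + k)) :=
        hpower _ _ (hN n) hle
    _ ≤ 2 * (θ ^ k) ^ β * (D * Γ (N (n + k))) := by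
        have hΓ_nonneg := (hpos _ hL_pos').le
        gcongr
        exact hdilate _ (hN _)
    _ = 2 * D * (θ ^ β) ^ k * Γ (N (n + k)) := by
        rw [Real.rpow_pow_comm hθ_nonneg]
        ring

end Regularity

theorem statement16_general (N : ℕ → ℕ) (hN : ∀ n, 0 < N n) (c : ℝ)
    (hMN : ∀ n : ℕ, (∑ k ∈ Finset.range n, (N k : ℝ)) ≤ c * (N n : ℝ))
    (Γ : ℕ → ℝ) (hΓpos : ∀ m : ℕ, 1 ≤ m → 0 < Γ m) (hLRP : LRP Γ)
    (hΓmono : MonotoneOn Γ (Set.Ici 1)) (hΓdouble : Doubling Γ) (p : ℝ) (hp : 0 < p) :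
    (∃ K : ℝ, ∀ r : ℕ,
      (∑ n ∈ Finset.range (r + 1), Γ (N n) ^ p / Γ (N r) ^ p) ≤ K) ∧
    (∃ K : ℝ, ∀ r R : ℕ,
      (∑ n ∈ Finset.Icc r R, Γ (N r) ^ p / Γ (N n) ^ p) ≤ K) := by
  have hΓN_pos (n : ℕ) : 0 < Γ (N n) := hΓpos _ (hN n)
  have hΓNp_pos (n : ℕ) : 0 < Γ (N n) ^ p := Real.rpow_pos_of_pos (hΓN_pos n) p
  have hN_growth : GeometricGrowth fun n => (N n : ℝ) :=
    geometricGrowth_of_sum_range_le (fun n => Nat.cast_pos.2 (hN n)) hMN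
  have hΓNp_growth : GeometricGrowth fun n => Γ (N n) ^ p :=
    (hN_growth.comp_of_lrp_of_doubling hN hΓpos hLRP hΓmono hΓdouble).rpow
      (fun n => (hΓN_pos n).le) hp
  exact ⟨hΓNp_growth.exists_sum_range_div_le hΓNp_pos,
    hΓNp_growth.exists_sum_Icc_div_le hΓNp_pos⟩

theorem statement16 (N : ℕ → ℕ) (hN : ∀ n, 0 < N n) (c : ℝ)
    (hMN : ∀ n : ℕ, (∑ k ∈ Finset.range n, (N k : ℝ)) ≤ c * (N n : ℝ))
    (Γ : ℕ → ℝ) (hΓpos : ∀ m : ℕ, 1 ≤ m → 0 < Γ m)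
    (hLRP : ∃ b : ℕ, 0 < b ∧ ∀ m : ℕ, 1 ≤ m → 2 * Γ m ≤ Γ (b * m))
    (hΓmono : ∀ m n : ℕ, 1 ≤ m → m ≤ n → Γ m ≤ Γ n)
    (hΓdual : ∀ m n : ℕ, 1 ≤ m → m ≤ n → (m : ℝ) / Γ m ≤ (n : ℝ) / Γ n)
    (p : ℝ) (hp0 : 0 < p) (hp1 : p ≤ 1) :
    (∃ K : ℝ, ∀ r : ℕ,
      (∑ n ∈ Finset.range (r + 1), Γ (N n) ^ p / Γ (N r) ^ p) ≤ K) ∧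
    (∃ K : ℝ, ∀ r R : ℕ,
      (∑ n ∈ Finset.Icc r R, Γ (N r) ^ p / Γ (N n) ^ p) ≤ K) :=
  statement16_general N hN c hMN Γ hΓpos hLRP (fun m hm n _ => hΓmono m n hm)
    (doubling_of_monotoneOn_div hΓpos fun m hm n _ => hΓdual m n hm) p hp0

end AGpaper
end
end

section
/- Let (N_n)_{n=1}^∞ be a sequence of positive integers such that M_n := Σ_{k=1}^n N_k ≤ c·N_{n+1} for some constant c and all n. Let (Γ_n)_{n=1}^∞ be a sequence of positive reals having the lower regularity property, such that both (Γ_n) and (n/Γ_n) are non-decreasing, and let 0<q≤1. Then there is a constant C such that Σ_{n=r}^∞ (Γ_{m_n}/Γ_{N_n})^q ≤ C^q for every r∈ℕ and every sequence (m_n)_{n=r}^∞ of positive integers with m_n ≤ M_r for all n ≥ r. -/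
noncomputable section

open Classical
open scoped ENNReal NNReal

namespace AGpaper

/-! ### Biorthogonal systems and Schauder bases -/

variable {X : Type*} [AddCommGroup X] [Module ℝ X]

variable {mem : X → Prop} {nrm : X → ℝ}

/-!
Write `M n = ∑ k ≤ n, N k`. The domination hypothesis makes `M` grow geometrically, so by lower
regularity `Γ (M (n + K)) ≥ 2 * Γ (M n)` for some fixed `K`; hence
`∑ n ≥ r, (Γ (M r) / Γ (M n)) ^ q` is bounded by a geometric series whose value does not depend
on `r`. Since also `M n ≤ (c + 1) * N n`, the monotonicity of `n / Γ n` gives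
`Γ (M n) ≤ (c + 1) * Γ (N n)`, and thus `Γ (m n) / Γ (N n) ≤ (c + 1) * (Γ (M r) / Γ (M n))` as soon
as `m n ≤ M r`.
-/

section PartialSums

variable {N : ℕ → ℝ} {c : ℝ}

lemma one_add_inv_pow_mul_sum_range_le (hc : 0 < c)
    (hN : ∀ n, ∑ k ∈ Finset.range n, N k ≤ c * N n) (n K : ℕ) :
    (1 + c⁻¹) ^ K * ∑ k ∈ Finset.range n, N k ≤ ∑ k ∈ Finset.range (n + K), N k := by
  refine geom_le (u := fun i ↦ ∑ k ∈ Finset.range (n + i), N k) (by positivity) K fun i _ ↦ ?_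
  have hdiv : c⁻¹ * ∑ k ∈ Finset.range (n + i), N k ≤ N (n + i) :=
    (inv_mul_le_iff₀ hc).2 (hN (n + i))
  simp only [← add_assoc, Finset.sum_range_succ]
  linarith

lemma exists_mul_sum_range_le_sum_range_add (hc : 0 < c) (hN0 : ∀ n, 0 ≤ N n)
    (hN : ∀ n, ∑ k ∈ Finset.range n, N k ≤ c * N n) (b : ℝ) :
    ∃ K, ∀ n, b * ∑ k ∈ Finset.range n, N k ≤ ∑ k ∈ Finset.range (n + K), N k := by
  obtain ⟨K, hK⟩ := pow_unbounded_of_one_lt b (lt_add_of_pos_right 1 (inv_pos.2 hc))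
  refine ⟨K, fun n ↦ (mul_le_mul_of_nonneg_right hK.le ?_).trans
    (one_add_inv_pow_mul_sum_range_le hc hN n K)⟩
  exact Finset.sum_nonneg fun k _ ↦ hN0 k

end PartialSums

lemma LRP.exists_two_mul_le_comp_add {Γ : ℕ → ℝ} (hΓ : LRP Γ) (hmono : MonotoneOn Γ (Set.Ici 1))
    {M : ℕ → ℕ} (hM1 : ∀ n, 1 ≤ M n) (hM : ∀ b : ℕ, ∃ K, ∀ n, b * M n ≤ M (n + K)) :
    ∃ K, ∀ n, 2 * Γ (M n) ≤ Γ (M (n + K)) := by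
  obtain ⟨b, hb, hbΓ⟩ := hΓ
  obtain ⟨K, hK⟩ := hM b
  exact ⟨K, fun n ↦ (hbΓ _ (hM1 n)).trans
    (hmono (Nat.mul_pos hb (hM1 n)) (hM1 (n + K)) (hK n))⟩

lemma le_mul_of_div_le_div {x y u v D : ℝ} (hx : 0 < x) (hu : 0 < u) (hv : 0 < v)
    (hxy : x / u ≤ y / v) (hyD : y ≤ D * x) : v ≤ D * u := by
  refine le_of_mul_le_mul_left ?_ hx
  calc x * v ≤ y * u := (div_le_div_iff₀ hu hv).1 hxy
    _ ≤ D * x * u := by gcongr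
    _ = x * (D * u) := by ring

lemma sum_range_le_of_add_le_mul {𝕜 : Type*} [Field 𝕜] [LinearOrder 𝕜] [IsStrictOrderedRing 𝕜]
    {f : ℕ → 𝕜} {K : ℕ} {θ : 𝕜} (hθ : θ < 1) (hf0 : ∀ n, 0 ≤ f n)
    (hf : ∀ n, f (n + K) ≤ θ * f n) (L : ℕ) :
    ∑ i ∈ Finset.range L, f i ≤ (∑ i ∈ Finset.range K, f i) / (1 - θ) := by
  have hself : ∑ i ∈ Finset.range L, f i ≤
      ∑ i ∈ Finset.range K, f i + θ * ∑ i ∈ Finset.range L, f i :=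
    calc ∑ i ∈ Finset.range L, f i
        ≤ ∑ i ∈ Finset.range (K + L), f i :=
          Finset.sum_le_sum_of_subset_of_nonneg
            (Finset.range_subset_range.2 (Nat.le_add_left L K)) fun i _ _ ↦ hf0 i
      _ = ∑ i ∈ Finset.range K, f i + ∑ i ∈ Finset.range L, f (i + K) := by
          rw [Finset.sum_range_add]
          simp only [add_comm K]
      _ ≤ ∑ i ∈ Finset.range K, f i + θ * ∑ i ∈ Finset.range L, f i := by
          rw [Finset.mul_sum]
          gcongr with i
          exact hf i
  rw [le_div_iff₀ (sub_pos.2 hθ)]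
  linarith

section GeometricGrowth

variable {a : ℕ → ℝ} {ρ q : ℝ} {K : ℕ}

lemma sum_range_div_rpow_le (ha : ∀ n, 0 < a n) (hmono : Monotone a) (hρ : 1 < ρ)
    (hK : ∀ n, ρ * a n ≤ a (n + K)) (hq : 0 < q) (L : ℕ) :
    ∑ n ∈ Finset.range L, (a 0 / a n) ^ q ≤ K / (1 - ρ⁻¹ ^ q) := by
  have hρ0 : 0 < ρ := one_pos.trans hρ
  have hθ : ρ⁻¹ ^ q < 1 := Real.rpow_lt_one (by positivity) (inv_lt_one_of_one_lt₀ hρ) hq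
  have hratio : ∀ n, 0 ≤ a 0 / a n := fun n ↦ (div_pos (ha 0) (ha n)).le
  have hshift (n : ℕ) : (a 0 / a (n + K)) ^ q ≤ ρ⁻¹ ^ q * (a 0 / a n) ^ q := by
    rw [← Real.mul_rpow (by positivity) (hratio n)]
    refine Real.rpow_le_rpow (hratio _) ?_ hq.le
    calc a 0 / a (n + K) ≤ a 0 / (ρ * a n) :=
          div_le_div_of_nonneg_left (ha 0).le (mul_pos hρ0 (ha n)) (hK n)
      _ = ρ⁻¹ * (a 0 / a n) := by rw [div_mul_eq_div_div_swap, div_eq_inv_mul _ ρ]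
  have hterm (n : ℕ) : (a 0 / a n) ^ q ≤ 1 :=
    Real.rpow_le_one (hratio n) ((div_le_one (ha n)).2 (hmono n.zero_le)) hq.le
  calc ∑ n ∈ Finset.range L, (a 0 / a n) ^ q
      ≤ (∑ n ∈ Finset.range K, (a 0 / a n) ^ q) / (1 - ρ⁻¹ ^ q) :=
        sum_range_le_of_add_le_mul hθ (fun n ↦ Real.rpow_nonneg (hratio n) q) hshift L
    _ ≤ (∑ _n ∈ Finset.range K, 1) / (1 - ρ⁻¹ ^ q) :=
        div_le_div_of_nonneg_right (Finset.sum_le_sum fun n _ ↦ hterm n) (sub_pos.2 hθ).le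
    _ = K / (1 - ρ⁻¹ ^ q) := by simp

lemma sum_Icc_div_rpow_le (ha : ∀ n, 0 < a n) (hmono : Monotone a) (hρ : 1 < ρ)
    (hK : ∀ n, ρ * a n ≤ a (n + K)) (hq : 0 < q) (r R : ℕ) :
    ∑ n ∈ Finset.Icc r R, (a r / a n) ^ q ≤ K / (1 - ρ⁻¹ ^ q) := by
  rw [← Finset.Ico_add_one_right_eq_Icc, Finset.sum_Ico_eq_sum_range]
  refine sum_range_div_rpow_le (a := fun i ↦ a (r + i)) (fun i ↦ ha _)
    (fun i j hij ↦ hmono (Nat.add_le_add_left hij r)) hρ (fun i ↦ ?_) hq _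
  simpa only [add_assoc] using hK (r + i)

lemma sum_Icc_div_rpow_le_of_le {x y : ℕ → ℝ} {D : ℝ} {r : ℕ} (ha : ∀ n, 0 < a n)
    (hmono : Monotone a) (hρ : 1 < ρ) (hK : ∀ n, ρ * a n ≤ a (n + K)) (hq : 0 < q) (hD : 0 ≤ D)
    (hx0 : ∀ n, r ≤ n → 0 ≤ x n) (hx : ∀ n, r ≤ n → x n ≤ a r)
    (hy0 : ∀ n, 0 < y n) (hy : ∀ n, a n ≤ D * y n) (R : ℕ) :
    ∑ n ∈ Finset.Icc r R, (x n / y n) ^ q ≤ D ^ q * (K / (1 - ρ⁻¹ ^ q)) := by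
  have hratio (n : ℕ) (hn : r ≤ n) : x n / y n ≤ D * (a r / a n) := by
    rw [← mul_div_assoc, div_le_div_iff₀ (hy0 n) (ha n)]
    calc x n * a n ≤ a r * (D * y n) :=
          mul_le_mul (hx n hn) (hy n) (ha n).le (ha r).le
      _ = D * a r * y n := by ring
  calc ∑ n ∈ Finset.Icc r R, (x n / y n) ^ q
      ≤ ∑ n ∈ Finset.Icc r R, D ^ q * (a r / a n) ^ q := by
        refine Finset.sum_le_sum fun n hn ↦ ?_
        have hrn : r ≤ n := (Finset.mem_Icc.1 hn).1
        rw [← Real.mul_rpow hD (div_pos (ha r) (ha n)).le]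
        exact Real.rpow_le_rpow (div_nonneg (hx0 n hrn) (hy0 n).le) (hratio n hrn) hq.le
    _ = D ^ q * ∑ n ∈ Finset.Icc r R, (a r / a n) ^ q := (Finset.mul_sum ..).symm
    _ ≤ D ^ q * (K / (1 - ρ⁻¹ ^ q)) :=
        mul_le_mul_of_nonneg_left (sum_Icc_div_rpow_le ha hmono hρ hK hq r R)
          (Real.rpow_nonneg hD q)

end GeometricGrowth

section RegularSequences

variable {N : ℕ → ℕ} {c : ℝ} {Γ : ℕ → ℝ}

lemma one_le_sum_range_succ (hN : ∀ n, 0 < N n) (n : ℕ) : 1 ≤ ∑ k ∈ Finset.range (n + 1), N k :=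
  (hN n).trans_le (Finset.single_le_sum_of_canonicallyOrdered (Finset.self_mem_range_succ n))

lemma pos_of_sum_range_le_mul (hN : ∀ n, 0 < N n)
    (hMN : ∀ n, ∑ k ∈ Finset.range n, (N k : ℝ) ≤ c * N n) : 0 < c := by
  have hN0 : (0 : ℝ) < N 0 := Nat.cast_pos.2 (hN 0)
  have hone : (N 0 : ℝ) ≤ c * N 1 := by simpa only [Finset.sum_range_one] using hMN 1
  exact pos_of_mul_pos_left (hN0.trans_le hone) (Nat.cast_nonneg _)

lemma LRP.exists_two_mul_le_sum_range_succ (hΓ : LRP Γ) (hmono : MonotoneOn Γ (Set.Ici 1))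
    (hN : ∀ n, 0 < N n) (hMN : ∀ n, ∑ k ∈ Finset.range n, (N k : ℝ) ≤ c * N n) :
    ∃ K, ∀ n, 2 * Γ (∑ k ∈ Finset.range (n + 1), N k) ≤
      Γ (∑ k ∈ Finset.range (n + K + 1), N k) := by
  refine hΓ.exists_two_mul_le_comp_add (M := fun n ↦ ∑ k ∈ Finset.range (n + 1), N k) hmono
    (one_le_sum_range_succ hN) fun b ↦ ?_
  obtain ⟨K, hK⟩ := exists_mul_sum_range_le_sum_range_add (pos_of_sum_range_le_mul hN hMN)
    (fun n ↦ Nat.cast_nonneg (N n)) hMN b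
  refine ⟨K, fun n ↦ ?_⟩
  rw [add_right_comm]
  exact_mod_cast hK (n + 1)

lemma apply_sum_range_succ_le_mul (hN : ∀ n, 0 < N n)
    (hMN : ∀ n, ∑ k ∈ Finset.range n, (N k : ℝ) ≤ c * N n) (hΓpos : ∀ m, 1 ≤ m → 0 < Γ m)
    (hdual : MonotoneOn (fun n : ℕ ↦ (n : ℝ) / Γ n) (Set.Ici 1)) (n : ℕ) :
    Γ (∑ k ∈ Finset.range (n + 1), N k) ≤ (c + 1) * Γ (N n) := by
  have hM1 : 1 ≤ ∑ k ∈ Finset.range (n + 1), N k := one_le_sum_range_succ hN n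
  have hNM : N n ≤ ∑ k ∈ Finset.range (n + 1), N k :=
    Finset.single_le_sum_of_canonicallyOrdered (Finset.self_mem_range_succ n)
  refine le_mul_of_div_le_div (Nat.cast_pos.2 (hN n)) (hΓpos _ (hN n)) (hΓpos _ hM1)
    (hdual (hN n) hM1 hNM) ?_
  rw [Nat.cast_sum, Finset.sum_range_succ, add_one_mul]
  exact add_le_add_left (hMN n) _

end RegularSequences

theorem statement17_general (N : ℕ → ℕ) (hN : ∀ n, 0 < N n) (c : ℝ)
    (hMN : ∀ n : ℕ, (∑ k ∈ Finset.range n, (N k : ℝ)) ≤ c * (N n : ℝ))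
    (Γ : ℕ → ℝ) (hΓpos : ∀ m : ℕ, 1 ≤ m → 0 < Γ m) (hLRP : LRP Γ)
    (hΓmono : MonotoneOn Γ (Set.Ici 1))
    (hΓdual : MonotoneOn (fun n : ℕ ↦ (n : ℝ) / Γ n) (Set.Ici 1))
    (q : ℝ) (hq : 0 < q) :
    ∃ C : ℝ, 0 ≤ C ∧ ∀ r : ℕ, ∀ m : ℕ → ℕ,
      (∀ n, r ≤ n → 1 ≤ m n ∧ m n ≤ ∑ k ∈ Finset.range (r + 1), N k) →
      ∀ R : ℕ, (∑ n ∈ Finset.Icc r R, (Γ (m n) / Γ (N n)) ^ q) ≤ C ^ q := by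
  have hM1 := one_le_sum_range_succ hN
  have hc : 0 ≤ c + 1 := by linarith [pos_of_sum_range_le_mul hN hMN]
  obtain ⟨K, hK⟩ := hLRP.exists_two_mul_le_sum_range_succ hΓmono hN hMN
  have hΓM : Monotone fun n ↦ Γ (∑ k ∈ Finset.range (n + 1), N k) := fun i j hij ↦
    hΓmono (hM1 i) (hM1 j) (Finset.sum_le_sum_of_subset (Finset.range_mono (by lia)))
  have hθ : (2⁻¹ : ℝ) ^ q ≤ 1 := Real.rpow_le_one (by norm_num) (by norm_num) hq.le
  have hB : 0 ≤ (c + 1) ^ q * (K / (1 - 2⁻¹ ^ q)) :=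
    mul_nonneg (Real.rpow_nonneg hc q) (div_nonneg K.cast_nonneg (sub_nonneg.2 hθ))
  refine ⟨((c + 1) ^ q * (K / (1 - 2⁻¹ ^ q))) ^ q⁻¹, Real.rpow_nonneg hB _, fun r m hm R ↦ ?_⟩
  rw [Real.rpow_inv_rpow hB hq.ne']
  exact sum_Icc_div_rpow_le_of_le (fun n ↦ hΓpos _ (hM1 n)) hΓM one_lt_two hK hq hc
    (fun n hn ↦ (hΓpos _ (hm n hn).1).le)
    (fun n hn ↦ hΓmono (hm n hn).1 (hM1 r) (hm n hn).2)
    (fun n ↦ hΓpos _ (hN n)) (apply_sum_range_succ_le_mul hN hMN hΓpos hΓdual) R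

theorem statement17 (N : ℕ → ℕ) (hN : ∀ n, 0 < N n) (c : ℝ)
    (hMN : ∀ n : ℕ, (∑ k ∈ Finset.range n, (N k : ℝ)) ≤ c * (N n : ℝ))
    (Γ : ℕ → ℝ) (hΓpos : ∀ m : ℕ, 1 ≤ m → 0 < Γ m)
    (hLRP : ∃ b : ℕ, 0 < b ∧ ∀ m : ℕ, 1 ≤ m → 2 * Γ m ≤ Γ (b * m))
    (hΓmono : ∀ m n : ℕ, 1 ≤ m → m ≤ n → Γ m ≤ Γ n)
    (hΓdual : ∀ m n : ℕ, 1 ≤ m → m ≤ n → (m : ℝ) / Γ m ≤ (n : ℝ) / Γ n)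
    (q : ℝ) (hq0 : 0 < q) (hq1 : q ≤ 1) :
    ∃ C : ℝ, 0 ≤ C ∧ ∀ r : ℕ, ∀ m : ℕ → ℕ,
      (∀ n, r ≤ n → 1 ≤ m n ∧ m n ≤ ∑ k ∈ Finset.range (r + 1), N k) →
      ∀ R : ℕ, (∑ n ∈ Finset.Icc r R, (Γ (m n) / Γ (N n)) ^ q) ≤ C ^ q :=
  statement17_general N hN c hMN Γ hΓpos hLRP (fun m hm n _ hmn ↦ hΓmono m n hm hmn)
    (fun m hm n _ hmn ↦ hΓdual m n hm hmn) q hq0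

end AGpaper
end
end

section
/- Let 0<r≤1 and let (x_n, x_n*)_{n=1}^∞ be a biorthogonal system in an r-Banach space 𝕏. Suppose that a sequence (y_n)_{n=1}^∞ in 𝕏 satisfies Σ_{n=1}^∞ ‖x_n − y_n‖^r ‖x_n*‖^r < 1. Then (x_n) and (y_n) are congruent: there is a bounded linear isomorphism S of 𝕏 onto itself such that S(x_n)=y_n for all n∈ℕ. -/
noncomputable section

open Classical
open scoped ENNReal NNReal

namespace AGpaper

/-! ### Biorthogonal systems and Schauder bases -/

variable {X : Type*} [AddCommGroup X] [Module ℝ X]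

variable {mem : X → Prop} {nrm : X → ℝ}

/-!
The `r`-th power of an `r`-norm is a complete translation-invariant norm on the additive group of
`X`. For this norm, `T f = ∑ n, x_n*(f) • (x_n - y_n)` converges absolutely and is a linear
contraction, so the Banach fixed point theorem solves `f - T f = g` uniquely for every `g`. Hence
`S = id - T` is an isomorphism, and `S x_n = y_n` by biorthogonality.
-/

theorem forall_pos_iff_forall_pos_rpow {r : ℝ} (hr : r ≠ 0) {P : ℝ → Prop} :
    (∀ ε, 0 < ε → P ε) ↔ ∀ ε, 0 < ε → P (ε ^ r) := by
  refine ⟨fun h ε hε => h _ (Real.rpow_pos_of_pos hε r), fun h ε hε => ?_⟩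
  simpa only [Real.rpow_inv_rpow hε.le hr] using h (ε ^ r⁻¹) (Real.rpow_pos_of_pos hε _)

section Rpow

variable {a b c r : ℝ}

theorem rpow_inv_mul_rpow (ha : 0 ≤ a) (hc : 0 ≤ c) (hr : r ≠ 0) :
    (c ^ r⁻¹ * a) ^ r = c * a ^ r := by
  rw [Real.mul_rpow (Real.rpow_nonneg hc _) ha, Real.rpow_inv_rpow hc hr]

theorem le_rpow_inv_mul_iff (ha : 0 ≤ a) (hb : 0 ≤ b) (hc : 0 ≤ c) (hr : 0 < r) :
    a ≤ c ^ r⁻¹ * b ↔ a ^ r ≤ c * b ^ r := by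
  rw [← rpow_inv_mul_rpow hb hc hr.ne', Real.rpow_le_rpow_iff ha (by positivity) hr]

theorem rpow_inv_mul_le_iff (ha : 0 ≤ a) (hb : 0 ≤ b) (hc : 0 ≤ c) (hr : 0 < r) :
    c ^ r⁻¹ * a ≤ b ↔ c * a ^ r ≤ b ^ r := by
  rw [← rpow_inv_mul_rpow ha hc hr.ne', Real.rpow_le_rpow_iff (by positivity) hb hr]

end Rpow

/-- The pointwise sum of a family of linear maps. -/
def tsumLinearMap {R M N ι : Type*} [Semiring R] [AddCommMonoid M] [Module R M]
    [AddCommMonoid N] [Module R N] [TopologicalSpace N] [T2Space N] [ContinuousAdd N]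
    [ContinuousConstSMul R N] (u : ι → M →ₗ[R] N) (hu : ∀ f, Summable fun i => u i f) :
    M →ₗ[R] N where
  toFun f := ∑' i, u i f
  map_add' f g := by simp only [map_add, (hu f).tsum_add (hu g)]
  map_smul' a f := by simp only [map_smul, RingHom.id_apply, (hu f).tsum_const_smul a]

section Gauge

open Filter Topology

variable {X : Type*} [SeminormedAddCommGroup X] {r : ℝ} {q : X → ℝ}

theorem qCauchy_iff_cauchySeq (hr : 0 < r) (hq : ∀ f, 0 ≤ q f) (hnorm : ∀ f, ‖f‖ = q f ^ r)
    {u : ℕ → X} : QCauchy q u ↔ CauchySeq u := by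
  rw [Metric.cauchySeq_iff, forall_pos_iff_forall_pos_rpow hr.ne', QCauchy]
  refine forall₂_congr fun ε hε => ?_
  simp only [ge_iff_le, dist_eq_norm, hnorm, Real.rpow_lt_rpow_iff (hq _) hε.le hr]

theorem qTendsto_iff_tendsto (hr : 0 < r) (hq : ∀ f, 0 ≤ q f) (hnorm : ∀ f, ‖f‖ = q f ^ r)
    {u : ℕ → X} {f : X} : QTendsto q u f ↔ Tendsto u atTop (𝓝 f) := by
  rw [Metric.tendsto_atTop, forall_pos_iff_forall_pos_rpow hr.ne', QTendsto]
  refine forall₂_congr fun ε hε => ?_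
  simp only [ge_iff_le, dist_eq_norm, hnorm, Real.rpow_lt_rpow_iff (hq _) hε.le hr]

end Gauge

section NormedGroup

variable {X : Type*} [NormedAddCommGroup X]

theorem bijective_sub_of_contractingWith [CompleteSpace X] {K : ℝ≥0} {T : X → X}
    (hT : ContractingWith K T) : Function.Bijective fun f => f - T f := by
  refine (Function.bijective_iff_existsUnique _).2 fun g => ?_
  have hg : ContractingWith K fun f => g + T f :=
    ⟨hT.1, fun f f' => by simpa only [edist_add_left] using hT.2 f f'⟩
  have fixed_iff (f : X) : f - T f = g ↔ Function.IsFixedPt (fun f => g + T f) f :=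
    sub_eq_iff_eq_add.trans eq_comm
  exact ⟨hg.fixedPoint, (fixed_iff _).2 hg.fixedPoint_isFixedPt,
    fun f hf => hg.fixedPoint_unique ((fixed_iff f).1 hf)⟩

theorem contractingWith_of_norm_le {T : X →+ X} {θ : ℝ} (hθ : θ < 1)
    (hT : ∀ f, ‖T f‖ ≤ θ * ‖f‖) : ContractingWith θ.toNNReal T :=
  ⟨by exact_mod_cast Real.toNNReal_lt_one.2 hθ, AddMonoidHomClass.lipschitz_of_bound T θ hT⟩

theorem exists_bijective_map_eq_of_tsum_lt_one {𝕜 ι : Type*} [Semiring 𝕜] [Module 𝕜 X]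
    [DecidableEq ι] [CompleteSpace X] [ContinuousConstSMul 𝕜 X]
    {x y : ι → X} {φ : ι → X →ₗ[𝕜] 𝕜} {a : ι → ℝ}
    (hφ : ∀ i j, φ i (x j) = if i = j then 1 else 0)
    (hbound : ∀ i f, ‖φ i f • (x i - y i)‖ ≤ a i * ‖f‖)
    (ha : Summable a) (hlt : ∑' i, a i < 1) :
    ∃ S : X →ₗ[𝕜] X, Function.Bijective S ∧
      (∀ f, ‖S f‖ ≤ (1 + ∑' i, a i) * ‖f‖) ∧
      (∀ f, (1 - ∑' i, a i) * ‖f‖ ≤ ‖S f‖) ∧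
      ∀ i, S (x i) = y i := by
  have hsum (f : X) : Summable fun i => φ i f • (x i - y i) :=
    .of_norm_bounded (ha.mul_right ‖f‖) fun i => hbound i f
  let T : X →ₗ[𝕜] X := tsumLinearMap (fun i => (φ i).smulRight (x i - y i)) hsum
  have norm_T_le (f : X) : ‖T f‖ ≤ (∑' i, a i) * ‖f‖ :=
    tsum_of_norm_bounded (ha.hasSum.mul_right ‖f‖) fun i => hbound i f
  have T_apply_x (i : ι) : T (x i) = x i - y i := by
    calc T (x i) = ∑' j, φ j (x i) • (x j - y j) := rfl
      _ = φ i (x i) • (x i - y i) :=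
        tsum_eq_single i fun j hj => by rw [hφ, if_neg hj, zero_smul]
      _ = x i - y i := by rw [hφ, if_pos rfl, one_smul]
  refine ⟨LinearMap.id - T, ?_, fun f => ?_, fun f => ?_, fun i => ?_⟩
  · exact bijective_sub_of_contractingWith
      (contractingWith_of_norm_le (T := T.toAddMonoidHom) hlt norm_T_le)
  · calc ‖f - T f‖ ≤ ‖f‖ + ‖T f‖ := norm_sub_le f (T f)
      _ ≤ (1 + ∑' i, a i) * ‖f‖ := by linarith [norm_T_le f]
  · calc (1 - ∑' i, a i) * ‖f‖ ≤ ‖f‖ - ‖T f‖ := by linarith [norm_T_le f]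
      _ ≤ ‖f - T f‖ := norm_sub_norm_le f (T f)
  · rw [LinearMap.sub_apply, LinearMap.id_apply, T_apply_x, sub_sub_cancel]

end NormedGroup

/-- An `r`-norm `q` on a vector space over a normed field `𝕜`, as an unbundled predicate;
`q 0 = 0` is the case `a = 0` of homogeneity. Exponents `r > 1` are allowed; over the reals they
force the space to be trivial. -/
structure IsRNorm (𝕜 : Type*) {X : Type*} [NormedField 𝕜] [AddCommGroup X] [Module 𝕜 X]
    (r : ℝ) (q : X → ℝ) : Prop where
  exponent_pos : 0 < r
  pos : ∀ f, f ≠ 0 → 0 < q f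
  homogeneous : ∀ (a : 𝕜) (f : X), q (a • f) = ‖a‖ * q f
  add_rpow_le : ∀ f g, q (f + g) ^ r ≤ q f ^ r + q g ^ r

section DualGauge

variable {𝕜 X : Type*} [SeminormedRing 𝕜] [AddCommGroup X] [Module 𝕜 X]

/-- The operator norm of a functional with respect to the gauge `q`. As a supremum of reals it
has the value `0` when `φ` is unbounded on the unit ball of `q`. -/
def dualGauge (q : X → ℝ) (φ : X →ₗ[𝕜] 𝕜) : ℝ :=
  sSup {t : ℝ | ∃ f : X, q f ≤ 1 ∧ t = ‖φ f‖}

theorem dualGauge_nonneg (q : X → ℝ) (φ : X →ₗ[𝕜] 𝕜) : 0 ≤ dualGauge q φ := by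
  apply Real.sSup_nonneg
  rintro t ⟨f, -, rfl⟩
  exact norm_nonneg _

end DualGauge

namespace IsRNorm

section NormedField

variable {𝕜 X : Type*} [NormedField 𝕜] [AddCommGroup X] [Module 𝕜 X] {r : ℝ} {q : X → ℝ}

protected theorem map_zero (hq : IsRNorm 𝕜 r q) : q 0 = 0 := by
  simpa only [zero_smul, norm_zero, zero_mul] using hq.homogeneous 0 0

protected theorem map_neg (hq : IsRNorm 𝕜 r q) (f : X) : q (-f) = q f := by
  simpa only [neg_smul, one_smul, norm_neg, norm_one, one_mul] using hq.homogeneous (-1) f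

theorem nonneg (hq : IsRNorm 𝕜 r q) (f : X) : 0 ≤ q f := by
  obtain rfl | hf := eq_or_ne f 0
  · exact hq.map_zero.ge
  · exact (hq.pos f hf).le

/-- The additive group `X` normed by `f ↦ q f ^ r`. This norm is subadditive but, for `r ≠ 1`,
not homogeneous, so it is not part of a `NormedSpace` structure. -/
abbrev toNormedAddCommGroup (hq : IsRNorm 𝕜 r q) : NormedAddCommGroup X :=
  AddGroupNorm.toNormedAddCommGroup
    { toFun := fun f => q f ^ r
      map_zero' := by rw [hq.map_zero, Real.zero_rpow hq.exponent_pos.ne']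
      add_le' := hq.add_rpow_le
      neg' := fun f => by rw [hq.map_neg]
      eq_zero_of_map_eq_zero' := fun f hf => by
        by_contra hne
        exact (Real.rpow_pos_of_pos (hq.pos f hne) r).ne' hf }

theorem completeSpace (hq : IsRNorm 𝕜 r q)
    (hcomplete : ∀ u : ℕ → X, QCauchy q u → ∃ f, QTendsto q u f) :
    letI := hq.toNormedAddCommGroup
    CompleteSpace X := by
  let := hq.toNormedAddCommGroup
  have hnorm (f : X) : ‖f‖ = q f ^ r := rfl
  refine Metric.complete_of_cauchySeq_tendsto fun u hu => ?_
  obtain ⟨f, hf⟩ := hcomplete u ((qCauchy_iff_cauchySeq hq.exponent_pos hq.nonneg hnorm).2 hu)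
  exact ⟨f, (qTendsto_iff_tendsto hq.exponent_pos hq.nonneg hnorm).1 hf⟩

theorem rpow_smul (hq : IsRNorm 𝕜 r q) (a : 𝕜) (f : X) :
    q (a • f) ^ r = ‖a‖ ^ r * q f ^ r := by
  rw [hq.homogeneous, Real.mul_rpow (norm_nonneg a) (hq.nonneg f)]

theorem continuousConstSMul (hq : IsRNorm 𝕜 r q) :
    letI := hq.toNormedAddCommGroup
    ContinuousConstSMul 𝕜 X := by
  let := hq.toNormedAddCommGroup
  exact ⟨fun a => AddMonoidHomClass.continuous_of_bound (DistribSMul.toAddMonoidHom X a) (‖a‖ ^ r)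
    fun f => (hq.rpow_smul a f).le⟩

end NormedField

section RCLike

variable {𝕜 X : Type*} [RCLike 𝕜] [AddCommGroup X] [Module 𝕜 X] {r : ℝ} {q : X → ℝ}

theorem norm_apply_le_dualGauge_mul (hq : IsRNorm 𝕜 r q) {φ : X →ₗ[𝕜] 𝕜}
    (hφ : ∃ C : ℝ, ∀ f, ‖φ f‖ ≤ C * q f) (f : X) : ‖φ f‖ ≤ dualGauge q φ * q f := by
  obtain rfl | hf := eq_or_ne f 0
  · simp only [map_zero, norm_zero, hq.map_zero, mul_zero, le_refl]
  obtain ⟨C, hC⟩ := hφ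
  have hqf : 0 < q f := hq.pos f hf
  have norm_coe_inv : ‖((q f)⁻¹ : 𝕜)‖ = (q f)⁻¹ := by
    rw [norm_inv, RCLike.norm_ofReal, abs_of_pos hqf]
  have bdd : BddAbove {t : ℝ | ∃ f : X, q f ≤ 1 ∧ t = ‖φ f‖} := by
    refine ⟨|C|, ?_⟩
    rintro t ⟨g, hg, rfl⟩
    calc ‖φ g‖ ≤ C * q g := hC g
      _ ≤ |C| * 1 := mul_le_mul (le_abs_self C) hg (hq.nonneg g) (abs_nonneg C)
      _ = |C| := mul_one _
  have unit_bound : ‖φ (((q f)⁻¹ : 𝕜) • f)‖ ≤ dualGauge q φ :=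
    le_csSup bdd ⟨_, by rw [hq.homogeneous, norm_coe_inv, inv_mul_cancel₀ hqf.ne'], rfl⟩
  rwa [map_smul, norm_smul, norm_coe_inv, inv_mul_le_iff₀' hqf] at unit_bound

theorem rpow_apply_smul_le (hq : IsRNorm 𝕜 r q) {φ : X →ₗ[𝕜] 𝕜}
    (hφ : ∃ C : ℝ, ∀ f, ‖φ f‖ ≤ C * q f) (d f : X) :
    q (φ f • d) ^ r ≤ q d ^ r * dualGauge q φ ^ r * q f ^ r := by
  calc q (φ f • d) ^ r = ‖φ f‖ ^ r * q d ^ r := hq.rpow_smul (φ f) d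
    _ ≤ (dualGauge q φ * q f) ^ r * q d ^ r := by
      gcongr
      · exact Real.rpow_nonneg (hq.nonneg d) r
      · exact hq.exponent_pos.le
      · exact hq.norm_apply_le_dualGauge_mul hφ f
    _ = q d ^ r * dualGauge q φ ^ r * q f ^ r := by
      rw [Real.mul_rpow (dualGauge_nonneg q φ) (hq.nonneg f)]
      ring

end RCLike

end IsRNorm

theorem statement19_general {𝕜 X ι : Type*} [RCLike 𝕜] [AddCommGroup X] [Module 𝕜 X]
    [DecidableEq ι] {r : ℝ} {q : X → ℝ} (hq : IsRNorm 𝕜 r q)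
    (hcomplete : ∀ u : ℕ → X, QCauchy q u → ∃ f, QTendsto q u f)
    {x : ι → X} {φ : ι → X →ₗ[𝕜] 𝕜}
    (hφ_bdd : ∀ i, ∃ C : ℝ, ∀ f : X, ‖φ i f‖ ≤ C * q f)
    (hbiorth : ∀ i j, φ i (x j) = if i = j then 1 else 0)
    {y : ι → X} (hsummable : Summable fun i => q (x i - y i) ^ r * dualGauge q (φ i) ^ r)
    (hsmall : ∑' i, q (x i - y i) ^ r * dualGauge q (φ i) ^ r < 1) :
    ∃ S : X →ₗ[𝕜] X, Function.Bijective S ∧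
      (∃ C : ℝ, ∀ f : X, q (S f) ≤ C * q f) ∧
      (∃ c : ℝ, 0 < c ∧ ∀ f : X, c * q f ≤ q (S f)) ∧
      ∀ i, S (x i) = y i := by
  let := hq.toNormedAddCommGroup
  have := hq.completeSpace hcomplete
  have := hq.continuousConstSMul
  obtain ⟨S, hS, norm_S_le, le_norm_S, hSx⟩ := exists_bijective_map_eq_of_tsum_lt_one hbiorth
    (fun i f => hq.rpow_apply_smul_le (hφ_bdd i) (x i - y i) f) hsummable hsmall
  set θ := ∑' i, q (x i - y i) ^ r * dualGauge q (φ i) ^ r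
  have θ_nonneg : 0 ≤ θ := tsum_nonneg fun i =>
    mul_nonneg (Real.rpow_nonneg (hq.nonneg _) r) (Real.rpow_nonneg (dualGauge_nonneg q (φ i)) r)
  have one_sub_pos : 0 < 1 - θ := sub_pos.2 hsmall
  refine ⟨S, hS, ⟨(1 + θ) ^ r⁻¹, fun f => ?_⟩,
    ⟨(1 - θ) ^ r⁻¹, Real.rpow_pos_of_pos one_sub_pos _, fun f => ?_⟩, hSx⟩
  · exact (le_rpow_inv_mul_iff (hq.nonneg _) (hq.nonneg f) (by positivity) hq.exponent_pos).2
      (norm_S_le f)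
  · exact (rpow_inv_mul_le_iff (hq.nonneg f) (hq.nonneg _) one_sub_pos.le hq.exponent_pos).2
      (le_norm_S f)

theorem statement19 {X : Type*} [AddCommGroup X] [Module ℝ X]
    (r : ℝ) (hr0 : 0 < r) (hr1 : r ≤ 1)
    (q : X → ℝ)
    (hq_pos : ∀ x : X, x ≠ 0 → 0 < q x) (hq_zero : q 0 = 0)
    (hq_smul : ∀ (a : ℝ) (x : X), q (a • x) = |a| * q x)
    (hq_tri : ∀ x y : X, q (x + y) ^ r ≤ q x ^ r + q y ^ r)
    (hq_complete : ∀ u : ℕ → X, QCauchy q u → ∃ x, QTendsto q u x)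
    (x : ℕ → X) (xs : ℕ → X →ₗ[ℝ] ℝ)
    (hxs_bdd : ∀ n, ∃ C : ℝ, ∀ f : X, |xs n f| ≤ C * q f)
    (hbiorth : ∀ m n, xs m (x n) = if m = n then (1 : ℝ) else 0)
    (y : ℕ → X)
    (hsummable : Summable fun n =>
      q (x n - y n) ^ r * (sSup {t : ℝ | ∃ f : X, q f ≤ 1 ∧ t = |xs n f|}) ^ r)
    (hsmall : (∑' n : ℕ,
      q (x n - y n) ^ r * (sSup {t : ℝ | ∃ f : X, q f ≤ 1 ∧ t = |xs n f|}) ^ r) < 1) :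
    ∃ S : X →ₗ[ℝ] X, Function.Bijective S ∧
      (∃ C : ℝ, ∀ f : X, q (S f) ≤ C * q f) ∧
      (∃ c : ℝ, 0 < c ∧ ∀ f : X, c * q f ≤ q (S f)) ∧
      ∀ n, S (x n) = y n := by
  exact statement19_general (𝕜 := ℝ) ⟨hr0, hq_pos, hq_smul, hq_tri⟩ hq_complete hxs_bdd hbiorth
    hsummable hsmall

end AGpaper
end
end
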